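/- arXiv:1907.07499 — 7 statements merged into one kernel-verified Lean document; each statement's English description precedes it below -/
import Mathlib

section
/- Let S₁,…,S_N be an iterated function scheme of similitudes on ℝ^d satisfying the open set condition, with attractor K, and let qᵢ denote the unique fixed point of Sᵢ. If qᵢ = q_j for indices i,j ∈ {1,…,N}, then i = j. -/
/-- Composition of the maps of an IFS along a finite word:
`Sw S [w₁, …, wₙ] = S w₁ ∘ ⋯ ∘ S wₙ`. -/
def Sw {N d : ℕ} (S : Fin N → EuclideanSpace ℝ (Fin d) → EuclideanSpace ℝ (Fin d)) :
    List (Fin N) → EuclideanSpace ℝ (Fin d) → EuclideanSpace ℝ (Fin d)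
  | [] => id
  | a :: w => S a ∘ Sw S w

theorem aux_lin {d : ℕ} (T : EuclideanSpace ℝ (Fin d) → EuclideanSpace ℝ (Fin d)) (c : ℝ)
    (hc : 0 < c) (hT : ∀ x y, dist (T x) (T y) = c * dist x y)
    (q : EuclideanSpace ℝ (Fin d)) (hq : T q = q) :
    ∃ A : EuclideanSpace ℝ (Fin d) ≃ₗᵢ[ℝ] EuclideanSpace ℝ (Fin d),
      ∀ y, T (q + y) = q + c • A y := by
  set F : EuclideanSpace ℝ (Fin d) → EuclideanSpace ℝ (Fin d) :=
    fun y => c⁻¹ • (T (q + y) - q) with hF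
  have hiso : Isometry F := by
    refine Isometry.of_dist_eq fun x y => ?_
    simp only [hF]
    rw [dist_smul₀, dist_sub_right, hT, dist_add_left, Real.norm_of_nonneg (inv_pos.2 hc).le]
    field_simp
  have hF0 : F 0 = 0 := by simp [hF, hq]
  let L := hiso.affineIsometryOfStrictConvexSpace
  have hL : ∀ y, L.linearIsometry y = F y := by
    intro y
    have h := L.map_vadd 0 y
    simp only [vadd_eq_add, add_zero] at h
    have h0 : L 0 = 0 := hF0
    rw [h0, add_zero] at h
    exact h.symm
  refine ⟨L.linearIsometry.toLinearIsometryEquiv rfl, fun y => ?_⟩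
  rw [LinearIsometry.coe_toLinearIsometryEquiv, hL]
  simp [hF, smul_smul, hc.ne']

theorem aux_rec {d : ℕ} (P Q : EuclideanSpace ℝ (Fin d) ≃ₗᵢ[ℝ] EuclideanSpace ℝ (Fin d))
    (x : EuclideanSpace ℝ (Fin d)) (ε : ℝ) (hε : 0 < ε) :
    ∃ k : ℕ, dist ((P ^ (k+1)) x) x < ε ∧ dist ((Q ^ (k+1)) x) x < ε := by
  have hcomp := (isCompact_closedBall (0 : EuclideanSpace ℝ (Fin d)) ‖x‖).prod
    (isCompact_closedBall (0 : EuclideanSpace ℝ (Fin d)) ‖x‖)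
  obtain ⟨a, -, φ, hφ, ht⟩ := hcomp.tendsto_subseq
    (x := fun n : ℕ => ((P ^ n) x, (Q ^ n) x)) (fun n => by simp)
  obtain ⟨M, hM⟩ := Metric.cauchySeq_iff.1 ht.cauchySeq ε hε
  have h := hM (M+1) (by simp) M le_rfl
  have hlt : φ M < φ (M+1) := hφ (Nat.lt_succ_self M)
  obtain ⟨k, hk⟩ := Nat.exists_eq_add_of_lt hlt
  refine ⟨k, ?_⟩
  simp only [Function.comp, Prod.dist_eq, max_lt_iff] at h
  have e : φ (M+1) = φ M + (k+1) := by omega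
  rw [e, pow_add, pow_add Q] at h
  simpa only [LinearIsometryEquiv.coe_mul, Function.comp, LinearIsometryEquiv.dist_map] using h

theorem aux_iter {d : ℕ} (f : EuclideanSpace ℝ (Fin d) → EuclideanSpace ℝ (Fin d))
    (P : EuclideanSpace ℝ (Fin d) ≃ₗᵢ[ℝ] EuclideanSpace ℝ (Fin d)) (q : EuclideanSpace ℝ (Fin d))
    (r : ℝ) (h : ∀ y, f (q + y) = q + r • P y) (n : ℕ) (y : EuclideanSpace ℝ (Fin d)) :
    f^[n] (q + y) = q + r ^ n • (P ^ n) y := by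
  induction n with
  | zero => simp
  | succ n ih =>
    rw [Function.iterate_succ_apply', ih, h, map_smul, smul_smul, pow_succ' r, pow_succ' P]
    rfl

/-- if the IFS of similitudes satisfies the OSC and `q i` denotes the
(unique) fixed point of `S i`, then `q i = q j` implies `i = j`. -/
theorem fixed_points_distinct {d N : ℕ} (hN : 2 ≤ N)
    (S : Fin N → EuclideanSpace ℝ (Fin d) → EuclideanSpace ℝ (Fin d))
    (c : Fin N → ℝ) (hc : ∀ i, c i ∈ Set.Ioo (0 : ℝ) 1)
    (hS : ∀ i x y, dist (S i x) (S i y) = c i * dist x y)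
    (K : Set (EuclideanSpace ℝ (Fin d))) (hKne : K.Nonempty) (hKcomp : IsCompact K)
    (hK : K = ⋃ i, S i '' K)
    (O : Set (EuclideanSpace ℝ (Fin d))) (hOne : O.Nonempty) (hOopen : IsOpen O)
    (hObdd : Bornology.IsBounded O) (hOsub : (⋃ i, S i '' O) ⊆ O)
    (hOdisj : Pairwise fun i j => Disjoint (S i '' O) (S j '' O))
    (q : Fin N → EuclideanSpace ℝ (Fin d)) (hq : ∀ i, S i (q i) = q i) :
    ∀ i j : Fin N, q i = q j → i = j := by
  intro i j hij
  by_contra hne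
  obtain ⟨A, hA⟩ := aux_lin (S i) (c i) (hc i).1 (hS i) (q i) (hq i)
  obtain ⟨B, hB⟩ := aux_lin (S j) (c j) (hc j).1 (hS j) (q i) (by rw [hij]; exact hq j)
  obtain ⟨x0, hx0⟩ := hOne
  obtain ⟨ε, hε, hball⟩ := Metric.isOpen_iff.1 hOopen x0 hx0
  have hmap : ∀ k, Set.MapsTo (S k) O O := fun k x hx =>
    hOsub (Set.mem_iUnion.2 ⟨k, x, hx, rfl⟩)
  set x := x0 - q i with hx
  have hxx : q i + x = x0 := by simp [hx]
  obtain ⟨k, hP, hQ⟩ := aux_rec (A * B) (B * A) x (ε / 2) (by positivity)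
  have hf := aux_iter (S i ∘ S j) (A * B) (q i) (c i * c j) (fun y => by
    simp [hB, hA, smul_smul]) (k+1)
  have hg := aux_iter (S j ∘ S i) (B * A) (q i) (c i * c j) (fun y => by
    simp [hB, hA, smul_smul, mul_comm]) (k+1)
  set y := ((B * A) ^ (k+1)).symm (((A * B) ^ (k+1)) x) with hy
  have hQy : ((B * A) ^ (k+1)) y = ((A * B) ^ (k+1)) x := by simp only [hy, LinearIsometryEquiv.apply_symm_apply]
  have hyx : dist y x < ε := by
    rw [← ((B * A) ^ (k+1)).dist_map, hQy]
    have := dist_triangle_right (((A * B) ^ (k+1)) x) (((B * A) ^ (k+1)) x) x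
    linarith
  have hyO : q i + y ∈ O := by
    apply hball
    rw [Metric.mem_ball, ← hxx, dist_add_left]
    exact hyx
  have heq : (S i ∘ S j)^[k+1] (q i + x) = (S j ∘ S i)^[k+1] (q i + y) := by
    rw [hf, hg, hQy]
  have h1 : (S i ∘ S j)^[k+1] (q i + x) ∈ S i '' O := by
    rw [Function.iterate_succ_apply']
    exact ⟨_, hmap j (((hmap i).comp (hmap j)).iterate k (by rw [hxx]; exact hx0)), rfl⟩
  have h2 : (S j ∘ S i)^[k+1] (q i + y) ∈ S j '' O := by
    rw [Function.iterate_succ_apply']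
    exact ⟨_, hmap i (((hmap j).comp (hmap i)).iterate k hyO), rfl⟩
  exact Set.disjoint_left.1 (hOdisj hne) h1 (heq ▸ h2)
end

section
/- Let S₁,…,S_N be an IFS of similitudes on ℝ^d satisfying the OSC and the nesting property, with attractor K. For every finite word u over 𝒜 = {1,…,N} and every letter a ∈ 𝒜, the set S_{ua}(K) ∩ S_u(F₀) is contained in the singleton {S_u(q_a)}; if moreover q_a ∈ F₀, then S_{ua}(K) ∩ S_u(F₀) = {S_u(q_a)}. -/
/-- The set of essential fixed points `F₀`: those fixed points `q i` which are mapped,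
by some pair of maps of the IFS, onto a different fixed point's image. -/
def F0 {N d : ℕ} (S : Fin N → EuclideanSpace ℝ (Fin d) → EuclideanSpace ℝ (Fin d))
    (q : Fin N → EuclideanSpace ℝ (Fin d)) : Set (EuclideanSpace ℝ (Fin d)) :=
  {x | x ∈ Set.range q ∧ ∃ i j : Fin N, ∃ y, y ∈ Set.range q ∧ x ≠ y ∧ S i x = S j y}


section helpers
variable {d : ℕ}

theorem hsim_surj (f : EuclideanSpace ℝ (Fin d) → EuclideanSpace ℝ (Fin d)) (c : ℝ) (hc : 0 < c)
    (hf : ∀ x y, dist (f x) (f y) = c * dist x y) : Function.Surjective f := by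
  have hiso : Isometry (fun x => c⁻¹ • f x) := by
    apply Isometry.of_dist_eq
    intro x y
    rw [dist_smul₀, hf, Real.norm_of_nonneg (by positivity)]
    field_simp
  let A := hiso.affineIsometryOfStrictConvexSpace
  have hA : ∀ x, A x = c⁻¹ • f x := fun x => rfl
  let B := A.toAffineIsometryEquiv rfl
  intro z
  obtain ⟨x, hx⟩ := B.surjective (c⁻¹ • z)
  refine ⟨x, ?_⟩
  have h2 : c⁻¹ • f x = c⁻¹ • z := by rw [← hA]; exact hx
  exact smul_right_injective _ (inv_ne_zero hc.ne') h2

theorem hsim_iter (f : EuclideanSpace ℝ (Fin d) → EuclideanSpace ℝ (Fin d)) (c : ℝ)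
    (hf : ∀ x y, dist (f x) (f y) = c * dist x y) (n : ℕ) (x y : EuclideanSpace ℝ (Fin d)) :
    dist (f^[n] x) (f^[n] y) = c ^ n * dist x y := by
  induction n with
  | zero => simp
  | succ n ih => rw [Function.iterate_succ_apply', Function.iterate_succ_apply', hf, ih]; ring

theorem hsim_inj (f : EuclideanSpace ℝ (Fin d) → EuclideanSpace ℝ (Fin d)) (c : ℝ) (hc : 0 < c)
    (hf : ∀ x y, dist (f x) (f y) = c * dist x y) : Function.Injective f := by
  intro x y h
  have := hf x y
  rw [h, dist_self] at this
  have h2 : dist x y = 0 := by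
    rcases mul_eq_zero.1 this.symm with h | h
    · exact absurd h hc.ne'
    · exact h
  exact dist_eq_zero.1 h2

/-- Core: three maps. -/
theorem hcore (f g e : EuclideanSpace ℝ (Fin d) → EuclideanSpace ℝ (Fin d)) (cb ca ce : ℝ)
    (hcb : cb ∈ Set.Ioo (0 : ℝ) 1) (hca : 0 < ca) (hce : ce ∈ Set.Ioo (0 : ℝ) 1)
    (hf : ∀ x y, dist (f x) (f y) = cb * dist x y)
    (hg : ∀ x y, dist (g x) (g y) = ca * dist x y)
    (he : ∀ x y, dist (e x) (e y) = ce * dist x y)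
    (O : Set (EuclideanSpace ℝ (Fin d))) (hOne : O.Nonempty) (hOopen : IsOpen O)
    (hfO : ∀ x ∈ O, f x ∈ O) (hgO : ∀ x ∈ O, g x ∈ O) (heO : ∀ x ∈ O, e x ∈ O)
    (hdis : ∀ x ∈ O, ∀ y ∈ O, g x ≠ f y)
    (p r : EuclideanSpace ℝ (Fin d)) (hp : f p = p) (hr : e r = r) (hgr : g r = p) : False := by
  obtain ⟨hcb0, hcb1⟩ := hcb
  obtain ⟨hce0, hce1⟩ := hce
  obtain ⟨x0, hx0⟩ := hOne
  obtain ⟨r0, hr0, hball⟩ := Metric.isOpen_iff.1 hOopen x0 hx0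
  have hfO' : ∀ n, ∀ x ∈ O, f^[n] x ∈ O := fun n x hx => by
    induction n with
    | zero => exact hx
    | succ n ih => rw [Function.iterate_succ_apply']; exact hfO _ ih
  have heO' : ∀ n, ∀ x ∈ O, e^[n] x ∈ O := fun n x hx => by
    induction n with
    | zero => exact hx
    | succ n ih => rw [Function.iterate_succ_apply']; exact heO _ ih
  let F : ℕ → ℕ → EuclideanSpace ℝ (Fin d) → EuclideanSpace ℝ (Fin d) :=
    fun k m x => f^[k] (g (e^[m] x))
  have hF : ∀ k m x y, dist (F k m x) (F k m y) = (cb ^ k * ca * ce ^ m) * dist x y := by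
    intro k m x y
    simp only [F]
    rw [hsim_iter f cb hf, hg, hsim_iter e ce he]; ring
  have hFr : ∀ k m, F k m r = p := by
    intro k m
    simp only [F]
    rw [Function.iterate_fixed hr, hgr, Function.iterate_fixed hp]
  have hsep : ∀ k m k' m', k < k' →
      cb ^ k * ca * ce ^ m * r0 ≤ dist (F k' m' x0) (F k m x0) := by
    intro k m k' m' hk
    by_contra! hlt
    obtain ⟨o, ho⟩ := hsim_surj (F k m) _ (by positivity) (hF k m) (F k' m' x0)
    rw [← ho, hF] at hlt
    have hoO : o ∈ O := hball (lt_of_mul_lt_mul_left hlt (by positivity))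
    obtain ⟨j, rfl⟩ := Nat.exists_eq_add_of_lt hk
    have h1 : f^[k] (g (e^[m] o)) = f^[k] (f (f^[j] (g (e^[m'] x0)))) := by
      have : F k m o = F (k + j + 1) m' x0 := ho
      simp only [F] at this
      rw [this, ← Function.iterate_succ_apply' f j, ← Function.iterate_add_apply]
      rfl
    have h2 := hsim_inj (f^[k]) (cb ^ k) (by positivity) (hsim_iter f cb hf k) h1
    exact hdis _ (heO' _ _ hoO) _ (hfO' _ _ (hgO _ (heO' _ _ hx0))) h2
  obtain ⟨t, -, htfin, ht⟩ := (isCompact_closedBall (0 : EuclideanSpace ℝ (Fin d))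
    (dist x0 r / ce)).finite_cover_balls (half_pos hr0)
  let n := htfin.toFinset.card
  let R := ca * cb ^ n
  have hR : 0 < R := by positivity
  have hm : ∀ k : ℕ, k ≤ n → ∃ m : ℕ, R ≤ cb ^ k * ca * ce ^ m ∧
      cb ^ k * ca * ce ^ m ≤ R / ce := by
    intro k hk
    obtain ⟨m, h1, h2⟩ := exists_nat_pow_near_of_lt_one (x := cb ^ (n - k)) (y := ce)
      (by positivity) (pow_le_one₀ hcb0.le hcb1.le) hce0 hce1
    have hRk : R = cb ^ k * ca * cb ^ (n - k) := by
      simp only [R]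
      rw [← Nat.add_sub_cancel' hk, pow_add]
      simp
      ring
    refine ⟨m, ?_, ?_⟩
    · rw [hRk]; gcongr
    · rw [le_div_iff₀ hce0, hRk, mul_assoc, ← pow_succ]; gcongr
  choose! M hM1 hM2 using hm
  let y : ℕ → EuclideanSpace ℝ (Fin d) := fun k => R⁻¹ • (F k (M k) x0 - p)
  have hyb : ∀ k ≤ n, y k ∈ Metric.closedBall (0 : EuclideanSpace ℝ (Fin d)) (dist x0 r / ce) := by
    intro k hk
    rw [mem_closedBall_zero_iff]
    simp only [y]
    rw [norm_smul, ← dist_eq_norm, ← hFr k (M k), hF, Real.norm_of_nonneg (by positivity)]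
    calc R⁻¹ * (cb ^ k * ca * ce ^ M k * dist x0 r) ≤ R⁻¹ * (R / ce * dist x0 r) := by
          gcongr; exact hM2 k hk
      _ = dist x0 r / ce := by field_simp
  have hys : ∀ k ≤ n, ∀ k' ≤ n, k < k' → r0 ≤ dist (y k') (y k) := by
    intro k hk k' hk' hlt
    have h1 := hsep k (M k) k' (M k') hlt
    have h2 : dist (y k') (y k) = R⁻¹ * dist (F k' (M k') x0) (F k (M k) x0) := by
      simp only [y]
      rw [dist_smul₀, dist_sub_right, Real.norm_of_nonneg (by positivity)]
    rw [h2]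
    calc r0 = R⁻¹ * (R * r0) := by field_simp
      _ ≤ _ := by
        gcongr
        refine le_trans ?_ h1
        gcongr
        exact hM1 k hk
  have hz : ∀ k, k ≤ n → ∃ z, z ∈ htfin.toFinset ∧ dist (y k) z < r0 / 2 := by
    intro k hk
    have := ht (hyb k hk)
    simp only [Set.mem_iUnion, Metric.mem_ball] at this
    obtain ⟨z, hz, hd⟩ := this
    exact ⟨z, by simpa using hz, hd⟩
  choose! Z hZ1 hZ2 using hz
  obtain ⟨k, hk, k', hk', hne, heq⟩ := Finset.exists_ne_map_eq_of_card_lt_of_maps_to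
    (s := Finset.range (n + 1)) (t := htfin.toFinset) (f := Z) (by simp [n])
    (fun k hk => hZ1 k (Nat.lt_succ_iff.1 (Finset.mem_range.1 hk)))
  have hkn := Nat.lt_succ_iff.1 (Finset.mem_range.1 hk)
  have hkn' := Nat.lt_succ_iff.1 (Finset.mem_range.1 hk')
  have hd : dist (y k) (y k') < r0 := by
    have h1 := hZ2 k hkn
    have h2 := hZ2 k' hkn'
    rw [← heq] at h2
    have := dist_triangle_right (y k) (y k') (Z k)
    linarith
  rcases lt_or_gt_of_ne hne with h | h
  · have := hys k hkn k' hkn' h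
    rw [dist_comm] at this
    linarith
  · have := hys k' hkn' k hkn h
    linarith

end helpers

theorem hSw_append {N d : ℕ} (S : Fin N → EuclideanSpace ℝ (Fin d) → EuclideanSpace ℝ (Fin d))
    (u : List (Fin N)) (a : Fin N) (x : EuclideanSpace ℝ (Fin d)) :
    Sw S (u ++ [a]) x = Sw S u (S a x) := by
  induction u with
  | nil => rfl
  | cons b u ih => simp only [List.cons_append, Sw, Function.comp_apply, ih]

theorem hSw_inj {N d : ℕ} (S : Fin N → EuclideanSpace ℝ (Fin d) → EuclideanSpace ℝ (Fin d))
    (hS : ∀ i, Function.Injective (S i)) (u : List (Fin N)) : Function.Injective (Sw S u) := by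
  induction u with
  | nil => exact Function.injective_id
  | cons b u ih => exact (hS b).comp ih

/-- Lemma 2.6: the cell S_{ua}(K) meets S_u(F₀) in at most the point
S_u(q_a), and exactly in that point when q_a ∈ F₀. -/
theorem cell_meets_parent_boundary {d N : ℕ} (hN : 2 ≤ N)
    (S : Fin N → EuclideanSpace ℝ (Fin d) → EuclideanSpace ℝ (Fin d))
    (c : Fin N → ℝ) (hc : ∀ i, c i ∈ Set.Ioo (0 : ℝ) 1)
    (hS : ∀ i x y, dist (S i x) (S i y) = c i * dist x y)
    (K : Set (EuclideanSpace ℝ (Fin d))) (hKne : K.Nonempty) (hKcomp : IsCompact K)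
    (hK : K = ⋃ i, S i '' K)
    (O : Set (EuclideanSpace ℝ (Fin d))) (hOne : O.Nonempty) (hOopen : IsOpen O)
    (hObdd : Bornology.IsBounded O) (hOsub : (⋃ i, S i '' O) ⊆ O)
    (hOdisj : Pairwise fun i j => Disjoint (S i '' O) (S j '' O))
    (q : Fin N → EuclideanSpace ℝ (Fin d)) (hq : ∀ i, S i (q i) = q i)
    (hnest : ∀ v w : List (Fin N), v.length = w.length → v ≠ w →
      Sw S v '' K ∩ Sw S w '' K = Sw S v '' F0 S q ∩ Sw S w '' F0 S q) :
    ∀ (u : List (Fin N)) (a : Fin N),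
      Sw S (u ++ [a]) '' K ∩ Sw S u '' F0 S q ⊆ {Sw S u (q a)} ∧
      (q a ∈ F0 S q → Sw S (u ++ [a]) '' K ∩ Sw S u '' F0 S q = {Sw S u (q a)}) := by
  have hinj : ∀ i, Function.Injective (S i) := fun i => hsim_inj (S i) (c i) (hc i).1 (hS i)
  have hSK : ∀ i, ∀ x ∈ K, S i x ∈ K := by
    intro i x hx
    rw [hK]
    exact Set.mem_iUnion.2 ⟨i, x, hx, rfl⟩
  have hSO : ∀ i, ∀ x ∈ O, S i x ∈ O := fun i x hx =>
    hOsub (Set.mem_iUnion.2 ⟨i, x, hx, rfl⟩)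
  have hqK : ∀ i, q i ∈ K := by
    intro i
    obtain ⟨x, hx, hmin⟩ := hKcomp.exists_isMinOn hKne
      (f := fun x => dist x (q i)) (by fun_prop)
    have h1 : dist x (q i) ≤ dist (S i x) (q i) := hmin (hSK i x hx)
    have h2 := hS i x (q i)
    rw [hq] at h2
    have h3 : dist x (q i) = 0 := by
      have h4 := dist_nonneg (x := x) (y := q i)
      have h5 := (hc i).2
      nlinarith
    rw [← dist_eq_zero.1 h3]; exact hx
  have key : ∀ a, ∀ x ∈ F0 S q, ∀ z ∈ K, S a z = x → x = q a := by
    rintro a x ⟨⟨b, rfl⟩, -⟩ z hz hzx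
    by_contra hne
    have hab : a ≠ b := by rintro rfl; exact hne rfl
    have hmem : q b ∈ Sw S [a] '' K ∩ Sw S [b] '' K :=
      ⟨⟨z, hz, hzx⟩, ⟨q b, hqK b, hq b⟩⟩
    rw [hnest [a] [b] rfl (by simpa using hab)] at hmem
    obtain ⟨⟨p, ⟨⟨e, rfl⟩, -⟩, hp⟩, -⟩ := hmem
    refine hcore (S b) (S a) (S e) (c b) (c a) (c e) (hc b) (hc a).1 (hc e) (hS b) (hS a) (hS e)
      O hOne hOopen (hSO b) (hSO a) (hSO e) ?_ (q b) (q e) (hq b) (hq e) hp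
    intro x hx y hy hxy
    exact Set.disjoint_left.1 (hOdisj hab) ⟨x, hx, rfl⟩ ⟨y, hy, hxy.symm⟩
  intro u a
  have hsub : Sw S (u ++ [a]) '' K ∩ Sw S u '' F0 S q ⊆ {Sw S u (q a)} := by
    rintro _ ⟨⟨z, hz, rfl⟩, ⟨x, hx, hxz⟩⟩
    rw [hSw_append] at hxz ⊢
    have h1 := hSw_inj S hinj u hxz
    rw [← h1, key a x hx z hz h1.symm]
    rfl
  refine ⟨hsub, fun hqa => Set.Subset.antisymm hsub ?_⟩
  rintro _ rfl
  exact ⟨⟨q a, hqK a, by rw [hSw_append, hq]⟩, ⟨q a, hqa, rfl⟩⟩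
end

section
/- Let S₁,…,S_N be an IFS of similitudes on ℝ^d satisfying the OSC and the nesting property, with attractor K. For all nonempty finite words u, v over 𝒜 = {1,…,N} with |u| = |v|, u ≠ v and u⁻ ≠ v⁻, the intersection S_u(K) ∩ S_v(K) contains at most one point. -/
lemma surj_aux {d : ℕ} (f : EuclideanSpace ℝ (Fin d) → EuclideanSpace ℝ (Fin d)) (c : ℝ)
    (hc : 0 < c) (hf : ∀ x y, dist (f x) (f y) = c * dist x y) : Function.Surjective f := by
  have hi : Isometry (fun x => c⁻¹ • f x) := by
    refine Isometry.of_dist_eq fun x y => ?_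
    rw [dist_smul₀, hf, Real.norm_eq_abs, abs_of_pos (inv_pos.2 hc)]
    field_simp
  let A := hi.affineIsometryOfStrictConvexSpace
  have h1 : Function.Surjective A.toAffineMap := by
    rw [← AffineMap.linear_surjective_iff]
    apply LinearMap.surjective_of_injective
    rw [AffineMap.linear_injective_iff]
    exact A.injective
  intro y
  obtain ⟨x, hx⟩ := h1 (c⁻¹ • y)
  refine ⟨x, ?_⟩
  have : c⁻¹ • f x = c⁻¹ • y := hx
  exact smul_right_injective _ (inv_ne_zero hc.ne') this

lemma iter_dist {d : ℕ} (f : EuclideanSpace ℝ (Fin d) → EuclideanSpace ℝ (Fin d)) (c : ℝ)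
    (hf : ∀ x y, dist (f x) (f y) = c * dist x y) (n : ℕ) (x y) :
    dist (f^[n] x) (f^[n] y) = c ^ n * dist x y := by
  induction n with
  | zero => simp
  | succ n ih => rw [Function.iterate_succ_apply', Function.iterate_succ_apply', hf, ih]; ring

lemma inj_aux {d : ℕ} (f : EuclideanSpace ℝ (Fin d) → EuclideanSpace ℝ (Fin d)) (c : ℝ)
    (hc : 0 < c) (hf : ∀ x y, dist (f x) (f y) = c * dist x y) : Function.Injective f := by
  intro x y h
  have := hf x y
  rw [h, dist_self] at this
  have h2 : dist x y = 0 := by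
    rcases mul_eq_zero.1 this.symm with h | h
    · exact absurd h hc.ne'
    · exact h
  exact dist_eq_zero.1 h2

lemma packing {d : ℕ} (C r : ℝ) (hr : 0 < r) : ∃ M : ℕ, ∀ g : Fin M → EuclideanSpace ℝ (Fin d),
    (∀ m, dist (g m) 0 ≤ C) → (∀ m m', m < m' → r ≤ dist (g m) (g m')) → False := by
  obtain ⟨t, -, htf, ht⟩ := (isCompact_closedBall (0 : EuclideanSpace ℝ (Fin d)) C).finite_cover_balls
    (half_pos hr)
  refine ⟨htf.toFinset.card + 1, fun g h1 h2 => ?_⟩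
  have h3 : ∀ m, ∃ y ∈ t, dist (g m) y < r / 2 := by
    intro m
    have := ht (Metric.mem_closedBall.2 (h1 m))
    simpa using this
  choose F hF hF2 using h3
  obtain ⟨a, -, b, -, hab, he⟩ := Finset.exists_ne_map_eq_of_card_lt_of_maps_to
    (s := Finset.univ) (t := htf.toFinset) (f := F) (by simp) (by intro m _; simpa using hF m)
  have h4 : dist (g a) (g b) < r := by
    have := dist_triangle_right (g a) (g b) (F a)
    have h5 := hF2 a
    have h6 := hF2 b
    rw [← he] at h6
    linarith
  rcases lt_or_gt_of_ne hab with h | h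
  · exact absurd (h2 _ _ h) (not_le.2 h4)
  · rw [dist_comm] at h4
    exact absurd (h2 _ _ h) (not_le.2 h4)

lemma core {d N : ℕ}
    (S : Fin N → EuclideanSpace ℝ (Fin d) → EuclideanSpace ℝ (Fin d))
    (c : Fin N → ℝ) (hc : ∀ i, c i ∈ Set.Ioo (0 : ℝ) 1)
    (hS : ∀ i x y, dist (S i x) (S i y) = c i * dist x y)
    (O : Set (EuclideanSpace ℝ (Fin d))) (hOne : O.Nonempty) (hOopen : IsOpen O)
    (hOsub : (⋃ i, S i '' O) ⊆ O)
    (hOdisj : Pairwise fun i j => Disjoint (S i '' O) (S j '' O))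
    (q : Fin N → EuclideanSpace ℝ (Fin d)) (hq : ∀ i, S i (q i) = q i)
    (i k l : Fin N) (hik : i ≠ k) (h : q k = S i (q l)) : False := by
  have hsub : ∀ j x, x ∈ O → S j x ∈ O := fun j x hx =>
    hOsub (Set.mem_iUnion.2 ⟨j, x, hx, rfl⟩)
  have hsubn : ∀ j n x, x ∈ O → (S j)^[n] x ∈ O := by
    intro j n x hx
    induction n with
    | zero => exact hx
    | succ n ih => rw [Function.iterate_succ_apply']; exact hsub _ _ ih
  obtain ⟨p, hp⟩ := hOne
  obtain ⟨r, hr, hball⟩ := Metric.isOpen_iff.1 hOopen p hp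
  have hck := hc k
  have hcl := hc l
  have hci := hc i
  obtain ⟨M, hM⟩ := packing (d := d) (dist p (q l) / c l) r hr
  have hn : ∀ m : ℕ, ∃ n : ℕ, c l ^ (n + 1) < c k ^ (M - m) ∧ c k ^ (M - m) ≤ c l ^ n := fun m =>
    exists_nat_pow_near_of_lt_one (pow_pos hck.1 _) (pow_le_one₀ hck.1.le hck.2.le) hcl.1 hcl.2
  choose n hn1 hn2 using hn
  let f : ℕ → EuclideanSpace ℝ (Fin d) → EuclideanSpace ℝ (Fin d) :=
    fun m x => (S k)^[m] (S i ((S l)^[n m] x))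
  let ρ : ℕ → ℝ := fun m => c k ^ m * (c i * c l ^ n m)
  let ε : ℝ := c k ^ M * c i
  have hε : 0 < ε := mul_pos (pow_pos hck.1 _) hci.1
  have hρpos : ∀ m, 0 < ρ m := fun m =>
    mul_pos (pow_pos hck.1 _) (mul_pos hci.1 (pow_pos hcl.1 _))
  have hfd : ∀ m x y, dist (f m x) (f m y) = ρ m * dist x y := by
    intro m x y
    simp only [f, ρ]
    rw [iter_dist _ _ (hS k), hS, iter_dist _ _ (hS l)]
    ring
  have hρ1 : ∀ m, m < M → ε ≤ ρ m := by
    intro m hm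
    have : ε = c k ^ m * (c i * c k ^ (M - m)) := by
      have : c k ^ M = c k ^ m * c k ^ (M - m) := by rw [← pow_add]; congr 1; omega
      simp only [ε, this]; ring
    rw [this]
    exact mul_le_mul_of_nonneg_left (mul_le_mul_of_nonneg_left (hn2 m) hci.1.le)
      (pow_pos hck.1 _).le
  have hρ2 : ∀ m, m < M → ρ m ≤ ε / c l := by
    intro m hm
    rw [le_div_iff₀ hcl.1]
    have : ε = c k ^ m * (c i * c k ^ (M - m)) := by
      have : c k ^ M = c k ^ m * c k ^ (M - m) := by rw [← pow_add]; congr 1; omega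
      simp only [ε, this]; ring
    have h2 : ρ m * c l = c k ^ m * (c i * c l ^ (n m + 1)) := by simp only [ρ]; ring
    rw [this, h2]
    exact mul_le_mul_of_nonneg_left (mul_le_mul_of_nonneg_left (hn1 m).le hci.1.le)
      (pow_pos hck.1 _).le
  have hfq : ∀ m, f m (q l) = q k := by
    intro m
    simp only [f]
    rw [Function.iterate_fixed (hq l), ← h, Function.iterate_fixed (hq k)]
  have hdis : ∀ m m', m < m' → ∀ x ∈ O, ∀ y ∈ O, f m x ≠ f m' y := by
    intro m m' hm x hx y hy he
    obtain ⟨e, rfl⟩ : ∃ e, m' = m + (e + 1) := ⟨m' - m - 1, by omega⟩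
    simp only [f] at he
    rw [Function.iterate_add_apply] at he
    have := (Function.Injective.iterate (inj_aux _ _ hck.1 (hS k)) m) he
    rw [Function.iterate_succ_apply'] at this
    refine Set.disjoint_left.1 (hOdisj hik) ⟨_, hsubn l (n m) x hx, rfl⟩ ?_
    rw [this]
    exact ⟨_, hsubn _ _ _ (hsub _ _ (hsubn _ _ _ hy)), rfl⟩
  have hsep : ∀ m m', m < m' → m' < M → ε * r ≤ dist (f m p) (f m' p) := by
    intro m m' hm hm'
    by_contra hcon
    push Not at hcon
    obtain ⟨x, hx⟩ := surj_aux (f m) (ρ m) (hρpos m) (hfd m) (f m' p)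
    rw [← hx, hfd] at hcon
    have h1 := hρ1 m (by omega)
    have hxr : dist p x < r := by
      by_contra hge
      push Not at hge
      have := mul_le_mul h1 hge hr.le (hρpos m).le
      linarith
    exact hdis m m' hm x (hball (by rw [Metric.mem_ball, dist_comm]; exact hxr)) p hp hx
  refine hM (fun m => ε⁻¹ • (f m p - q k)) ?_ ?_
  · intro m
    rw [dist_zero_right, norm_smul, Real.norm_eq_abs, abs_of_pos (inv_pos.2 hε), ← dist_eq_norm,
      ← hfq m, hfd, inv_mul_le_iff₀ hε]
    calc _ ≤ ε / c l * dist p (q l) := mul_le_mul_of_nonneg_right (hρ2 m m.2) dist_nonneg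
      _ = _ := by ring
  · intro m m' hm
    rw [dist_smul₀, Real.norm_eq_abs, abs_of_pos (inv_pos.2 hε), dist_sub_right,
      le_inv_mul_iff₀ hε]
    exact hsep m m' hm m'.2

lemma Sw_append {N d : ℕ} (S : Fin N → EuclideanSpace ℝ (Fin d) → EuclideanSpace ℝ (Fin d))
    (w : List (Fin N)) (i : Fin N) (x) : Sw S (w ++ [i]) x = Sw S w (S i x) := by
  induction w with
  | nil => rfl
  | cons a w ih => simp only [List.cons_append, Sw, Function.comp_apply, ih]

/-- Lemma 2.7: for nested fractals, two distinct cells of the same level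
with distinct parents intersect in at most one point. -/
theorem cells_intersect_in_at_most_one_point {d N : ℕ} (hN : 2 ≤ N)
    (S : Fin N → EuclideanSpace ℝ (Fin d) → EuclideanSpace ℝ (Fin d))
    (c : Fin N → ℝ) (hc : ∀ i, c i ∈ Set.Ioo (0 : ℝ) 1)
    (hS : ∀ i x y, dist (S i x) (S i y) = c i * dist x y)
    (K : Set (EuclideanSpace ℝ (Fin d))) (hKne : K.Nonempty) (hKcomp : IsCompact K)
    (hK : K = ⋃ i, S i '' K)
    (O : Set (EuclideanSpace ℝ (Fin d))) (hOne : O.Nonempty) (hOopen : IsOpen O)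
    (hObdd : Bornology.IsBounded O) (hOsub : (⋃ i, S i '' O) ⊆ O)
    (hOdisj : Pairwise fun i j => Disjoint (S i '' O) (S j '' O))
    (q : Fin N → EuclideanSpace ℝ (Fin d)) (hq : ∀ i, S i (q i) = q i)
    (hnest : ∀ v w : List (Fin N), v.length = w.length → v ≠ w →
      Sw S v '' K ∩ Sw S w '' K = Sw S v '' F0 S q ∩ Sw S w '' F0 S q) :
    ∀ u v : List (Fin N), u ≠ [] → v ≠ [] → u.length = v.length → u ≠ v →
      u.dropLast ≠ v.dropLast →
      (Sw S u '' K ∩ Sw S v '' K).Subsingleton := by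
  have hinj : ∀ w, Function.Injective (Sw S w) := by
    intro w
    induction w with
    | nil => exact Function.injective_id
    | cons a w ih => exact (inj_aux _ _ (hc a).1 (hS a)).comp ih
  have hSK : ∀ i x, x ∈ K → S i x ∈ K := by
    intro i x hx
    rw [hK]
    exact Set.mem_iUnion.2 ⟨i, x, hx, rfl⟩
  intro u v hu hv hlen huv hdl
  have key : ∀ x ∈ Sw S u '' K ∩ Sw S v '' K, x = Sw S u.dropLast (q (u.getLast hu)) := by
    rintro x ⟨⟨a, ha, hax⟩, ⟨b, hb, hbx⟩⟩
    rw [← List.dropLast_append_getLast hu, Sw_append] at hax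
    rw [← List.dropLast_append_getLast hv, Sw_append] at hbx
    have hx : x ∈ Sw S u.dropLast '' K ∩ Sw S v.dropLast '' K :=
      ⟨⟨_, hSK _ _ ha, hax⟩, ⟨_, hSK _ _ hb, hbx⟩⟩
    rw [hnest _ _ (by simp [hlen]) hdl] at hx
    obtain ⟨⟨y, ⟨⟨k, rfl⟩, -⟩, hy⟩, -⟩ := hx
    have e : q k = S (u.getLast hu) a := hinj _ (hy.trans hax.symm)
    by_cases hik : u.getLast hu = k
    · rw [hik, hy]
    · exfalso
      have hqK : q k ∈ K := by rw [e]; exact hSK _ _ ha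
      have hm : q k ∈ Sw S [u.getLast hu] '' K ∩ Sw S [k] '' K :=
        ⟨⟨a, ha, e.symm⟩, ⟨q k, hqK, hq k⟩⟩
      rw [hnest [u.getLast hu] [k] rfl (by simpa using hik)] at hm
      obtain ⟨⟨y, ⟨⟨l, rfl⟩, -⟩, hy⟩, -⟩ := hm
      exact core S c hc hS O hOne hOopen hOsub hOdisj q hq _ k l hik hy.symm
  intro x hx y hy
  rw [key x hx, key y hy]
end

section
/- Let S₁,…,S_N be an IFS of similitudes on ℝ^d satisfying the OSC and the nesting property, with attractor K. Then the relation ∼ on finite words, defined by v ∼ w iff v = w or (|v| = |w|, S_v(K) ∩ S_w(K) ≠ ∅ and v⁻ ≠ w⁻), is transitive; consequently ∼ is an equivalence relation. -/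
open Filter Topology

namespace NestAux

variable {d N : ℕ}

def Sim (c : ℝ) (f : EuclideanSpace ℝ (Fin d) → EuclideanSpace ℝ (Fin d)) : Prop :=
  0 < c ∧ ∀ x y, dist (f x) (f y) = c * dist x y

lemma Sim.inj {c : ℝ} {f : EuclideanSpace ℝ (Fin d) → EuclideanSpace ℝ (Fin d)}
    (h : Sim c f) : Function.Injective f := by
  intro x y hxy
  have := h.2 x y
  rw [hxy, dist_self] at this
  rcases mul_eq_zero.1 this.symm with h0 | h0
  · exact absurd h0 h.1.ne'
  · exact dist_eq_zero.1 h0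

lemma Sim.surj {c : ℝ} {f : EuclideanSpace ℝ (Fin d) → EuclideanSpace ℝ (Fin d)}
    (h : Sim c f) : Function.Surjective f := by
  have hc := h.1
  have hi : Isometry (fun x => c⁻¹ • f x) := by
    refine Isometry.of_dist_eq fun x y => ?_
    rw [dist_smul₀, h.2, Real.norm_of_nonneg (inv_nonneg.2 hc.le)]
    field_simp
  let A := hi.affineIsometryOfStrictConvexSpace
  have hA : ∀ x, A x = c⁻¹ • f x := fun x => rfl
  have hs : Function.Surjective A.linearIsometry :=
    LinearMap.injective_iff_surjective.1 A.linearIsometry.injective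
  intro y
  obtain ⟨v, hv⟩ := hs (c⁻¹ • y - A 0)
  refine ⟨v, ?_⟩
  have h1 : A v = c⁻¹ • y := by
    have := A.map_vadd 0 v
    simp only [vadd_eq_add, add_zero] at this
    rw [this, hv]; abel
  rw [hA] at h1
  exact smul_right_injective _ (inv_ne_zero hc.ne') h1

lemma Sim.comp {a b : ℝ} {f g : EuclideanSpace ℝ (Fin d) → EuclideanSpace ℝ (Fin d)}
    (hf : Sim a f) (hg : Sim b g) : Sim (a * b) (f ∘ g) :=
  ⟨mul_pos hf.1 hg.1, fun x y => by simp [hf.2, hg.2, mul_assoc]⟩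

lemma Sim.iter {a : ℝ} {f : EuclideanSpace ℝ (Fin d) → EuclideanSpace ℝ (Fin d)}
    (hf : Sim a f) (n : ℕ) : Sim (a ^ n) (f^[n]) := by
  induction n with
  | zero => exact ⟨by simp, fun x y => by simp⟩
  | succ n ih => rw [Function.iterate_succ, pow_succ]; exact ih.comp hf

lemma Sim.ball {c : ℝ} {f : EuclideanSpace ℝ (Fin d) → EuclideanSpace ℝ (Fin d)}
    (h : Sim c f) (x : EuclideanSpace ℝ (Fin d)) (r : ℝ) :
    Metric.ball (f x) (c * r) ⊆ f '' Metric.ball x r := by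
  intro y hy
  obtain ⟨z, rfl⟩ := h.surj y
  refine ⟨z, ?_, rfl⟩
  rw [Metric.mem_ball, h.2] at hy
  exact lt_of_mul_lt_mul_left hy h.1.le

lemma key (S : Fin N → EuclideanSpace ℝ (Fin d) → EuclideanSpace ℝ (Fin d))
    (c : Fin N → ℝ) (hc : ∀ i, c i ∈ Set.Ioo (0 : ℝ) 1)
    (hS : ∀ i x y, dist (S i x) (S i y) = c i * dist x y)
    (O : Set (EuclideanSpace ℝ (Fin d))) (hOne : O.Nonempty) (hOopen : IsOpen O)
    (hOsub : (⋃ i, S i '' O) ⊆ O)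
    (hOdisj : Pairwise fun i j => Disjoint (S i '' O) (S j '' O))
    (q : Fin N → EuclideanSpace ℝ (Fin d)) (hq : ∀ i, S i (q i) = q i)
    (i j k : Fin N) (h : S k (q i) = q j) : k = j := by
  by_contra hkj
  have hsim : ∀ i, Sim (c i) (S i) := fun i => ⟨(hc i).1, hS i⟩
  have hmap : ∀ i x, x ∈ O → S i x ∈ O := fun i x hx =>
    hOsub (Set.mem_iUnion.2 ⟨i, x, hx, rfl⟩)
  have hiter : ∀ i n x, x ∈ O → (S i)^[n] x ∈ O := by
    intro i n
    induction n with
    | zero => intro x hx; exact hx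
    | succ n ih => intro x hx; exact ih _ (hmap i x hx)
  obtain ⟨o, ho⟩ := hOne
  obtain ⟨r, hr, hball⟩ := Metric.isOpen_iff.1 hOopen o ho
  let e := Equiv.ofBijective (S j) ⟨(hsim j).inj, (hsim j).surj⟩
  have heS : ∀ x, S j (e.symm x) = x := fun x => e.apply_symm_apply x
  have hSe : ∀ x, e.symm (S j x) = x := fun x => e.symm_apply_apply x
  have hg : Sim (c j)⁻¹ e.symm := by
    refine ⟨inv_pos.2 (hc j).1, fun x y => ?_⟩
    have h1 := hS j (e.symm x) (e.symm y)
    rw [heS, heS] at h1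
    rw [h1, inv_mul_cancel_left₀ (hc j).1.ne']
  have hP : ∀ m : ℕ, ∃ n : ℕ, (c i) ^ (n + 1) < (c j) ^ m ∧ (c j) ^ m ≤ (c i) ^ n := fun m =>
    exists_nat_pow_near_of_lt_one (pow_pos (hc j).1 m) (pow_le_one₀ (hc j).1.le (hc j).2.le)
      (hc i).1 (hc i).2
  choose P hP1 hP2 using hP
  let T : ℕ → EuclideanSpace ℝ (Fin d) → EuclideanSpace ℝ (Fin d) :=
    fun m => e.symm^[m] ∘ (S k ∘ (S i)^[P m])
  let t : ℕ → ℝ := fun m => ((c j)⁻¹) ^ m * (c k * (c i) ^ (P m))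
  have hT : ∀ m, Sim (t m) (T m) := fun m => (hg.iter m).comp ((hsim k).comp ((hsim i).iter _))
  have ht1 : ∀ m, c k ≤ t m := by
    intro m
    have h1 := hP2 m
    have h2 := pow_pos (hc j).1 m
    have h3 := (hc k).1
    simp only [t, inv_pow]
    rw [← div_eq_inv_mul, le_div_iff₀ h2]
    exact mul_le_mul_of_nonneg_left h1 h3.le
  have ht2 : ∀ m, t m ≤ c k / c i := by
    intro m
    have h1 := hP1 m
    have h2 := pow_pos (hc j).1 m
    have h3 := (hc k).1
    simp only [t, inv_pow]
    rw [← div_eq_inv_mul, div_le_div_iff₀ h2 (hc i).1, mul_assoc, ← pow_succ]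
    exact mul_le_mul_of_nonneg_left h1.le h3.le
  have hTq : ∀ m, T m (q i) = q j := by
    intro m
    have h1 : (S i)^[P m] (q i) = q i := Function.iterate_fixed (hq i) _
    have h2 : e.symm (q j) = q j := by
      conv_lhs => rw [← hq j]
      exact hSe _
    simp only [T, Function.comp_apply, h1, h]
    exact Function.iterate_fixed h2 _
  have hdisj : ∀ m n, m < n → ∀ x ∈ O, ∀ y ∈ O, T m x ≠ T n y := by
    intro m n hmn x hx y hy hxy
    obtain ⟨s, rfl⟩ : ∃ s, n = m + (s + 1) := ⟨n - m - 1, by omega⟩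
    simp only [T, Function.comp_apply] at hxy
    rw [Function.iterate_add_apply] at hxy
    have h1 := (hg.iter m).inj hxy
    have hLI : Function.LeftInverse (S j) e.symm := heS
    have h2 := congrArg ((S j)^[s + 1]) h1
    rw [hLI.iterate (s + 1), Function.iterate_succ_apply'] at h2
    have hmem : S k ((S i)^[P (m + (s + 1))] y) ∈ S k '' O := ⟨_, hiter _ _ _ hy, rfl⟩
    refine Set.disjoint_left.1 (hOdisj hkj) hmem ?_
    rw [← h2]
    exact ⟨_, hiter _ _ _ (hmap _ _ (hiter _ _ _ hx)), rfl⟩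
  have hsep : ∀ m n, m < n → c k * r ≤ dist (T m o) (T n o) := by
    intro m n hmn
    by_contra hlt
    push Not at hlt
    have h1 : T m o ∈ Metric.ball (T n o) (t n * r) :=
      lt_of_lt_of_le hlt (mul_le_mul_of_nonneg_right (ht1 n) hr.le)
    obtain ⟨y, hy, hy'⟩ := (hT n).ball o r h1
    exact hdisj m n hmn o ho y (hball hy) hy'.symm
  have hbd : ∀ m, T m o ∈ Metric.closedBall (q j) (c k / c i * dist o (q i)) := by
    intro m
    rw [Metric.mem_closedBall]
    calc dist (T m o) (q j) = dist (T m o) (T m (q i)) := by rw [hTq]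
      _ = t m * dist o (q i) := (hT m).2 _ _
      _ ≤ _ := mul_le_mul_of_nonneg_right (ht2 m) dist_nonneg
  obtain ⟨a, -, φ, hφ, hlim⟩ := tendsto_subseq_of_bounded Metric.isBounded_closedBall hbd
  obtain ⟨M, hM⟩ := Metric.cauchySeq_iff.1 hlim.cauchySeq (c k * r) (mul_pos (hc k).1 hr)
  have h1 := hM M le_rfl (M + 1) (Nat.le_succ M)
  have h2 := hsep (φ M) (φ (M + 1)) (hφ (Nat.lt_succ_self M))
  simp only [Function.comp_apply] at h1
  linarith

lemma Sw_append (S : Fin N → EuclideanSpace ℝ (Fin d) → EuclideanSpace ℝ (Fin d))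
    (v w : List (Fin N)) (x : EuclideanSpace ℝ (Fin d)) :
    Sw S (v ++ w) x = Sw S v (Sw S w x) := by
  induction v with
  | nil => rfl
  | cons a v ih => simp [Sw, ih]

lemma Sw_inj (S : Fin N → EuclideanSpace ℝ (Fin d) → EuclideanSpace ℝ (Fin d))
    (hS : ∀ i, Function.Injective (S i)) (v : List (Fin N)) : Function.Injective (Sw S v) := by
  induction v with
  | nil => exact Function.injective_id
  | cons a v ih => exact (hS a).comp ih

/-- a common point of two cells with different parents is determined by either word -/
lemma point (S : Fin N → EuclideanSpace ℝ (Fin d) → EuclideanSpace ℝ (Fin d))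
    (hinj : ∀ i, Function.Injective (S i))
    (K : Set (EuclideanSpace ℝ (Fin d))) (hK : K = ⋃ i, S i '' K)
    (q : Fin N → EuclideanSpace ℝ (Fin d))
    (hkey : ∀ i j k, S k (q i) = q j → k = j)
    (hnest : ∀ v w : List (Fin N), v.length = w.length → v ≠ w →
      Sw S v '' K ∩ Sw S w '' K = Sw S v '' F0 S q ∩ Sw S w '' F0 S q)
    (v w : List (Fin N)) (a b : Fin N) (hl : v.length = w.length) (hne : v ≠ w)
    (x : EuclideanSpace ℝ (Fin d))
    (hv : x ∈ Sw S (v ++ [a]) '' K) (hw : x ∈ Sw S (w ++ [b]) '' K) :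
    x = Sw S v (q a) := by
  have hsub : ∀ (v : List (Fin N)) a, x ∈ Sw S (v ++ [a]) '' K → x ∈ Sw S v '' K := by
    rintro v a ⟨z, hz, rfl⟩
    refine ⟨S a z, ?_, ?_⟩
    · rw [hK]; exact Set.mem_iUnion.2 ⟨a, z, hz, rfl⟩
    · rw [Sw_append]; rfl
  have hne' : v ++ [a] ≠ w ++ [b] := fun h => hne (by
    have := congrArg List.dropLast h
    simpa using this)
  have h1 : x ∈ Sw S (v ++ [a]) '' F0 S q :=
    ((hnest _ _ (by simp [hl]) hne').subset ⟨hv, hw⟩).1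
  have h2 : x ∈ Sw S v '' F0 S q :=
    ((hnest _ _ hl hne).subset ⟨hsub _ _ hv, hsub _ _ hw⟩).1
  obtain ⟨_, ⟨⟨i, rfl⟩, -⟩, hi⟩ := h1
  obtain ⟨_, ⟨⟨j, rfl⟩, -⟩, hj⟩ := h2
  rw [Sw_append, ← hj] at hi
  have h3 : S a (q i) = q j := Sw_inj S hinj v hi
  rw [hkey _ _ _ h3, hj]

end NestAux

/-- Proposition 2.8: for nested fractals the relation
v ∼ w ⇔ v = w or (|v|=|w|, S_v(K)∩S_w(K)≠∅ and v⁻ ≠ w⁻) is transitive,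
hence an equivalence relation. -/
theorem sim_is_equivalence {d N : ℕ} (hN : 2 ≤ N)
    (S : Fin N → EuclideanSpace ℝ (Fin d) → EuclideanSpace ℝ (Fin d))
    (c : Fin N → ℝ) (hc : ∀ i, c i ∈ Set.Ioo (0 : ℝ) 1)
    (hS : ∀ i x y, dist (S i x) (S i y) = c i * dist x y)
    (K : Set (EuclideanSpace ℝ (Fin d))) (hKne : K.Nonempty) (hKcomp : IsCompact K)
    (hK : K = ⋃ i, S i '' K)
    (O : Set (EuclideanSpace ℝ (Fin d))) (hOne : O.Nonempty) (hOopen : IsOpen O)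
    (hObdd : Bornology.IsBounded O) (hOsub : (⋃ i, S i '' O) ⊆ O)
    (hOdisj : Pairwise fun i j => Disjoint (S i '' O) (S j '' O))
    (q : Fin N → EuclideanSpace ℝ (Fin d)) (hq : ∀ i, S i (q i) = q i)
    (hnest : ∀ v w : List (Fin N), v.length = w.length → v ≠ w →
      Sw S v '' K ∩ Sw S w '' K = Sw S v '' F0 S q ∩ Sw S w '' F0 S q) :
    Equivalence (fun v w : List (Fin N) =>
      v = w ∨ (v.length = w.length ∧ (Sw S v '' K ∩ Sw S w '' K).Nonempty ∧
        v.dropLast ≠ w.dropLast)) := by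
  have hinj : ∀ i, Function.Injective (S i) := fun i => NestAux.Sim.inj ⟨(hc i).1, hS i⟩
  have hkey := NestAux.key S c hc hS O hOne hOopen hOsub hOdisj q hq
  have hpt := NestAux.point S hinj K hK q hkey hnest
  refine ⟨fun v => Or.inl rfl, ?_, ?_⟩
  · rintro v w (h | ⟨h1, h2, h3⟩)
    · exact Or.inl h.symm
    · exact Or.inr ⟨h1.symm, by rwa [Set.inter_comm], h3.symm⟩
  · rintro u v w (rfl | ⟨h1, ⟨x, hxu, hxv⟩, h3⟩) hvw
    · exact hvw
    rcases hvw with rfl | ⟨h1', ⟨y, hyv, hyw⟩, h3'⟩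
    · exact Or.inr ⟨h1, ⟨x, hxu, hxv⟩, h3⟩
    rcases List.eq_nil_or_concat u with rfl | ⟨u, a, rfl⟩
    · exact absurd (by rw [List.eq_nil_of_length_eq_zero h1.symm]) h3
    rcases List.eq_nil_or_concat v with rfl | ⟨v, b, rfl⟩
    · simp at h1
    rcases List.eq_nil_or_concat w with rfl | ⟨w, e, rfl⟩
    · simp at h1'
    simp only [List.concat_eq_append] at *
    simp only [List.dropLast_concat, List.length_append, List.length_singleton,
      Nat.add_right_cancel_iff] at h1 h1' h3 h3'
    have e1 := hpt u v a b h1 h3 x hxu hxv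
    have e2 := hpt v u b a h1.symm h3.symm x hxv hxu
    have e3 := hpt v w b e h1' h3' y hyv hyw
    have e4 := hpt w v e b h1'.symm h3'.symm y hyw hyv
    have hxy : x = y := e2.trans e3.symm
    subst hxy
    by_cases huw : u = w
    · subst huw
      have h5 : q a = q e := NestAux.Sw_inj S hinj u (e1.symm.trans e4)
      have h6 : a = e := hkey a e a (by rw [hq, h5])
      exact Or.inl (by rw [h6])
    · exact Or.inr ⟨by simp [h1, h1'], ⟨x, hxu, hyw⟩, by simpa using huw⟩
end

section
/- For every word w ∈ 𝒲, the Green function satisfies g(∅,w) = m(w). -/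
open Classical

namespace Martin

/-- Finite words over the alphabet `Fin N` (the empty list is the empty word `∅`;
`w ++ [i]` is the word `wi` and `w.dropLast` is the parent `w⁻`). -/
abbrev Word (N : ℕ) := List (Fin N)

/-- The mass of a word: `m(w₁⋯wₙ) = m(w₁)⋯m(wₙ)`, `m(∅) = 1`. -/
noncomputable def mW {N : ℕ} (m : Fin N → ℝ) (w : Word N) : ℝ := (w.map m).prod

/-- Total mass of the equivalence class of `v`: `Σ_{v̂ ∼ v} m(v̂)`. -/
noncomputable def massCl {N : ℕ} (sim : Word N → Word N → Prop) (m : Fin N → ℝ)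
    (v : Word N) : ℝ :=
  ∑ᶠ u ∈ {u : Word N | sim u v}, mW m u

/-- Transition probability: `p(v,w) = m(w)/(Σ_{v̂∼v} m(v̂))` if `w = v̂i` for some
`v̂ ∼ v`, `i ∈ 𝒜`, and `0` otherwise. -/
noncomputable def pTrans {N : ℕ} (sim : Word N → Word N → Prop) (m : Fin N → ℝ)
    (v w : Word N) : ℝ :=
  if ∃ v' : Word N, ∃ i : Fin N, sim v' v ∧ w = v' ++ [i] then mW m w / massCl sim m v
  else 0

/-- `n`-step transition probabilities: `p₀(v,w) = δ_v(w)`,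
`pₙ(v,w) = Σ_u pₙ₋₁(v,u) p(u,w)`. -/
noncomputable def pn {N : ℕ} (sim : Word N → Word N → Prop) (m : Fin N → ℝ) :
    ℕ → Word N → Word N → ℝ
  | 0, v, w => if w = v then 1 else 0
  | n + 1, v, w => ∑ᶠ u : Word N, pn sim m n v u * pTrans sim m u w

/-- The Green function `g(v,w) = p_{|w|−|v|}(v,w)` (it equals `0` when `|w| < |v|`,
by truncated subtraction and since then `v ≠ w`). -/
noncomputable def green {N : ℕ} (sim : Word N → Word N → Prop) (m : Fin N → ℝ)
    (v w : Word N) : ℝ :=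
  pn sim m (w.length - v.length) v w

/-- The function `q(v,w) = g(v,w)·(Σ_{v̂∼v} m(v̂))/m(w)` for `v ≠ w`, `q(v,v) = 1`. -/
noncomputable def qfun {N : ℕ} (sim : Word N → Word N → Prop) (m : Fin N → ℝ)
    (v w : Word N) : ℝ :=
  if v = w then 1 else green sim m v w * massCl sim m v / mW m w

/-- The Martin kernel `k(v,w) = g(v,w)/g(∅,w)`. -/
noncomputable def mkernel {N : ℕ} (sim : Word N → Word N → Prop) (m : Fin N → ℝ)
    (v w : Word N) : ℝ :=
  green sim m v w / green sim m [] w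

/-- `R(w)`: the number of words equivalent to `w`. -/
noncomputable def Rnum {N : ℕ} (sim : Word N → Word N → Prop) (w : Word N) : ℕ :=
  Set.ncard {u : Word N | sim u w}

/-- Assumption (B2): for every word `w`, either all equivalent words have the same mass,
or all equivalent words have equivalent parents. -/
def B2 {N : ℕ} (sim : Word N → Word N → Prop) (m : Fin N → ℝ) : Prop :=
  ∀ w : Word N, (∀ w', sim w' w → mW m w' = mW m w) ∨
    (∀ w', sim w' w → sim w'.dropLast w.dropLast)


theorem mW_pos' {N : ℕ} (m : Fin N → ℝ) (hm : ∀ a, m a ∈ Set.Ioo (0 : ℝ) 1) (w : Word N) :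
    0 < mW m w := by
  induction w with
  | nil => simp [mW]
  | cons a t ih =>
    have := mul_pos (hm a).1 ih
    simpa [mW] using this

theorem massCl_pos' {N : ℕ} (sim : Word N → Word N → Prop) (hsim : Equivalence sim)
    (hlen : ∀ v w : Word N, sim v w → v.length = w.length)
    (m : Fin N → ℝ) (hm : ∀ a, m a ∈ Set.Ioo (0 : ℝ) 1) (v : Word N) :
    0 < massCl sim m v := by
  have hfin : {u : Word N | sim u v}.Finite :=
    (List.finite_length_eq (Fin N) v.length).subset (fun u hu => hlen u v hu)
  unfold massCl
  rw [finsum_mem_eq_finite_toFinset_sum _ hfin]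
  apply Finset.sum_pos
  · intro u _
    exact mW_pos' m hm u
  · exact ⟨v, by simpa using hsim.refl v⟩

theorem massCl_congr' {N : ℕ} (sim : Word N → Word N → Prop) (hsim : Equivalence sim)
    (m : Fin N → ℝ) (u v : Word N) (h : sim u v) : massCl sim m u = massCl sim m v := by
  have : {x : Word N | sim x u} = {x : Word N | sim x v} := by
    ext x
    exact ⟨fun hx => hsim.trans hx h, fun hx => hsim.trans hx (hsim.symm h)⟩
  unfold massCl
  rw [this]

theorem pn_empty' {N : ℕ} (sim : Word N → Word N → Prop) (hsim : Equivalence sim)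
    (hlen : ∀ v w : Word N, sim v w → v.length = w.length)
    (m : Fin N → ℝ) (hm : ∀ a, m a ∈ Set.Ioo (0 : ℝ) 1) (n : ℕ) :
    ∀ w : Word N, w.length = n → pn sim m n [] w = mW m w := by
  induction n with
  | zero =>
    intro w hw
    obtain rfl := List.length_eq_zero_iff.mp hw
    simp [pn, mW]
  | succ n ih =>
    intro w hw
    rcases List.eq_nil_or_concat w with rfl | ⟨v, i, rfl⟩
    · simp at hw
    have hv : v.length = n := by simpa using hw
    have hfin : {u : Word N | sim u v}.Finite :=
      (List.finite_length_eq (Fin N) v.length).subset (fun u hu => hlen u v hu)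
    have hpos := massCl_pos' sim hsim hlen m hm v
    have key : ∀ u : Word N, pn sim m n [] u * pTrans sim m u (v ++ [i]) =
        ∑ᶠ (_ : u ∈ {u : Word N | sim u v}),
          mW m u * (mW m (v ++ [i]) / massCl sim m v) := by
      intro u
      by_cases h : sim u v
      · have h1 : ∃ v' : Word N, ∃ j : Fin N, sim v' u ∧ v ++ [i] = v' ++ [j] :=
          ⟨v, i, hsim.symm h, rfl⟩
        have h2 : u ∈ {u : Word N | sim u v} := h
        rw [finsum_eq_if, if_pos h2, ih u ((hlen u v h).trans hv), pTrans, if_pos h1,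
          massCl_congr' sim hsim m u v h]
      · have h1 : ¬ ∃ v' : Word N, ∃ j : Fin N, sim v' u ∧ v ++ [i] = v' ++ [j] := by
          rintro ⟨v', j, h1, h2⟩
          have := (List.append_inj' h2 rfl).1
          subst this
          exact h (hsim.symm h1)
        have h2 : ¬ u ∈ {u : Word N | sim u v} := h
        rw [finsum_eq_if, if_neg h2, pTrans, if_neg h1, mul_zero]
    simp only [List.concat_eq_append]
    rw [pn, finsum_congr key, finsum_mem_eq_finite_toFinset_sum _ hfin, ← Finset.sum_mul,
      ← finsum_mem_eq_finite_toFinset_sum _ hfin]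
    change massCl sim m v * _ = _
    field_simp

/-- Theorem 3.6: `g(∅,w) = m(w)` for every word `w`. -/
theorem green_empty {N : ℕ} (hN : 2 ≤ N)
    (sim : Word N → Word N → Prop) (hsim : Equivalence sim)
    (hlen : ∀ v w : Word N, sim v w → v.length = w.length)
    (m : Fin N → ℝ) (hm : ∀ a, m a ∈ Set.Ioo (0 : ℝ) 1)
    (hm1 : ∑ a, m a = 1) :
    ∀ w : Word N, green sim m ([] : Word N) w = mW m w := by
  intro w
  exact pn_empty' sim hsim hlen m hm _ w (by simp)

end Martin
end

section
/- Let v, w, w̃ ∈ 𝒲 with w nonempty, w̃ ∼ w, v ≠ w and v ≠ w̃. If the parents are equivalent, w⁻ ∼ (w̃)⁻, then q(v,w) = q(v,w̃). -/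
open Classical

namespace Martin

/-- Proposition 3.9: if `w̃ ∼ w` have equivalent parents then
`q(v,w) = q(v,w̃)`. -/
theorem qfun_of_parent_sim {N : ℕ} (hN : 2 ≤ N)
    (sim : Word N → Word N → Prop) (hsim : Equivalence sim)
    (hlen : ∀ v w : Word N, sim v w → v.length = w.length)
    (m : Fin N → ℝ) (hm : ∀ a, m a ∈ Set.Ioo (0 : ℝ) 1)
    (hm1 : ∑ a, m a = 1) :
    ∀ v w wt : Word N, w ≠ [] → sim wt w → v ≠ w → v ≠ wt →
      sim w.dropLast wt.dropLast → qfun sim m v w = qfun sim m v wt := by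
  intro v w wt hw hs hvw hvwt hp
  have hl := hlen _ _ hs
  have hwt : wt ≠ [] := by
    intro h
    apply hw
    rw [h] at hl
    exact List.length_eq_zero_iff.mp (by simpa using hl.symm)
  have hpos : ∀ x : Word N, mW m x ≠ 0 := by
    intro x
    unfold mW
    apply List.prod_ne_zero
    simp only [List.mem_map, not_exists, not_and]
    intro a _ h
    exact absurd h (hm a).1.ne'
  have hT : ∀ x : Word N, x ≠ [] → ∀ u, pTrans sim m u x =
      mW m x * (if sim x.dropLast u then 1 / massCl sim m u else 0) := by
    intro x hx u
    have hiff : (∃ v' : Word N, ∃ i : Fin N, sim v' u ∧ x = v' ++ [i]) ↔ sim x.dropLast u := by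
      constructor
      · rintro ⟨v', i, h, rfl⟩
        simpa using h
      · intro h
        exact ⟨x.dropLast, x.getLast hx, h, (List.dropLast_append_getLast hx).symm⟩
    unfold pTrans
    by_cases h : sim x.dropLast u
    · rw [if_pos (hiff.mpr h), if_pos h]; ring
    · rw [if_neg (fun h' => h (hiff.mp h')), if_neg h]; ring
  have hP : ∀ n, ∀ x : Word N, x ≠ [] → pn sim m (n+1) v x / mW m x =
      ∑ᶠ u : Word N, pn sim m n v u * (if sim x.dropLast u then 1 / massCl sim m u else 0) := by
    intro n x hx
    rw [div_eq_iff (hpos x), mul_comm, ← smul_eq_mul, smul_finsum]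
    show (∑ᶠ u : Word N, pn sim m n v u * pTrans sim m u x) = _
    apply finsum_congr
    intro u
    rw [hT x hx u, smul_eq_mul]; ring
  unfold qfun green
  rw [if_neg hvw, if_neg hvwt, hl]
  rw [mul_div_right_comm, mul_div_right_comm]
  congr 1
  rcases w.length - v.length with _ | n
  · simp [pn, hvw.symm, hvwt.symm]
  · rw [hP n w hw, hP n wt hwt]
    apply finsum_congr
    intro u
    have : sim w.dropLast u ↔ sim wt.dropLast u :=
      ⟨fun h => hsim.trans (hsim.symm hp) h, fun h => hsim.trans hp h⟩
    simp only [this]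

end Martin
end

section
/- Let v, w, w̃ ∈ 𝒲 with w nonempty, w̃ ∼ w and v ≁ w. If w⁻ ∼ (w̃)⁻, then the Martin kernel satisfies k(v,w) = k(v,w̃). -/
open Classical

namespace Martin

theorem aux_pTrans {N : ℕ} (sim : Word N → Word N → Prop) (m : Fin N → ℝ)
    (u w : Word N) (hw : w ≠ []) :
    pTrans sim m u w = mW m w * (if sim w.dropLast u then (massCl sim m u)⁻¹ else 0) := by
  have h : (∃ v' : Word N, ∃ i : Fin N, sim v' u ∧ w = v' ++ [i]) ↔ sim w.dropLast u := by
    constructor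
    · rintro ⟨v', i, h, rfl⟩
      simpa using h
    · intro h
      exact ⟨w.dropLast, w.getLast hw, h, (List.dropLast_append_getLast hw).symm⟩
  unfold pTrans
  simp only [h]
  split_ifs
  · rw [div_eq_mul_inv]
  · simp

theorem aux_pn {N : ℕ} (sim : Word N → Word N → Prop) (m : Fin N → ℝ) (n : ℕ)
    (v w : Word N) (hw : w ≠ []) :
    pn sim m (n + 1) v w = mW m w *
      ∑ᶠ u : Word N, pn sim m n v u * (if sim w.dropLast u then (massCl sim m u)⁻¹ else 0) := by
  rw [← smul_eq_mul, smul_finsum]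
  simp only [pn]
  refine finsum_congr fun u => ?_
  rw [aux_pTrans sim m u w hw, smul_eq_mul]
  ring

theorem aux_mW {N : ℕ} (m : Fin N → ℝ) (hm : ∀ a, m a ∈ Set.Ioo (0 : ℝ) 1) (w : Word N) :
    mW m w ≠ 0 := by
  unfold mW
  apply List.prod_ne_zero
  intro h
  obtain ⟨a, -, ha⟩ := List.mem_map.1 h
  exact (hm a).1.ne' ha

/-- Lemma 4.2 e): if `w̃ ∼ w` have equivalent parents and `v ≁ w`,
then `k(v,w) = k(v,w̃)`. -/
theorem mkernel_of_parent_sim {N : ℕ} (hN : 2 ≤ N)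
    (sim : Word N → Word N → Prop) (hsim : Equivalence sim)
    (hlen : ∀ v w : Word N, sim v w → v.length = w.length)
    (m : Fin N → ℝ) (hm : ∀ a, m a ∈ Set.Ioo (0 : ℝ) 1)
    (hm1 : ∑ a, m a = 1) :
    ∀ v w wt : Word N, w ≠ [] → sim wt w → ¬ sim v w →
      sim w.dropLast wt.dropLast → mkernel sim m v w = mkernel sim m v wt := by
  intro v w wt hw hwt hv hp
  have hl : wt.length = w.length := hlen _ _ hwt
  have hwt0 : wt ≠ [] := by
    intro h
    rw [h] at hl
    exact hw (List.length_eq_zero_iff.1 hl.symm)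
  have hiff : ∀ u, sim wt.dropLast u ↔ sim w.dropLast u := fun u =>
    ⟨fun h => hsim.trans hp h, fun h => hsim.trans (hsim.symm hp) h⟩
  have hpos : 0 < w.length := List.length_pos_iff.2 hw
  unfold mkernel green
  rw [hl]
  cases hn : w.length - v.length with
  | zero =>
    have h1 : w ≠ v := by
      rintro rfl
      exact hv (hsim.refl _)
    have h2 : wt ≠ v := by
      rintro rfl
      exact hv hwt
    simp [pn, h1, h2]
  | succ n =>
    obtain ⟨k, hk⟩ : ∃ k, w.length - ([] : Word N).length = k + 1 :=
      ⟨w.length - 1, by simp only [List.length_nil]; omega⟩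
    rw [hk, aux_pn sim m n v w hw, aux_pn sim m n v wt hwt0, aux_pn sim m k [] w hw,
      aux_pn sim m k [] wt hwt0, mul_div_mul_left _ _ (aux_mW m hm w),
      mul_div_mul_left _ _ (aux_mW m hm wt)]
    simp only [hiff]

end Martin
end
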